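/- Let r ≥ 1. There is a unique Lie algebra homomorphism τ : ft(r) → ft(r) satisfying τ(t_{ij}) = t_{ij} for all 2 ≤ i,j ≤ r, τ(t_{1i}) = τ(t_{i1}) = −∑_{k=1}^r t_{ki} for all 2 ≤ i ≤ r, and τ(t_{11}) = ∑_{k,l=1}^r t_{kl}. (This is the cyclic structure map of the cyclic operad ft corresponding to the transposition 0 ↔ 1.) -/

import Mathlib

open FreeLieAlgebra

/-- The defining relations of the framed Drinfeld–Kohno Lie algebra `ft(r)`.  Generators are
indexed by `Fin r × Fin r`, the index `i : Fin r` representing `i+1 ∈ {1,…,r}`. -/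
def ftRel (r : ℕ) : Set (FreeLieAlgebra ℚ (Fin r × Fin r)) :=
  { x | (∃ i j : Fin r, x = of ℚ (i, j) - of ℚ (j, i)) ∨
        (∃ i j k l : Fin r, ({i, j} ∩ {k, l} : Set (Fin r)) = ∅ ∧
          x = ⁅of ℚ (i, j), of ℚ (k, l)⁆) ∨
        (∃ i j k : Fin r, x = ⁅of ℚ (i, j), of ℚ (k, i) + of ℚ (k, j)⁆) }

/-- The framed Drinfeld–Kohno Lie algebra `ft(r)`: the quotient of the free Lie algebra over `ℚ`
on the generators `t_{ij}`, `1 ≤ i,j ≤ r`, by the Lie ideal generated by the relations. -/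
abbrev ft (r : ℕ) :=
  FreeLieAlgebra ℚ (Fin r × Fin r) ⧸
    LieSubmodule.lieSpan ℚ (FreeLieAlgebra ℚ (Fin r × Fin r)) (ftRel r)

/-- The image `t_{ij}` in `ft(r)` of the generator indexed by `(i,j)`. -/
noncomputable def tf {r : ℕ} (i j : Fin r) : ft r :=
  LieSubmodule.Quotient.mk
    (N := LieSubmodule.lieSpan ℚ (FreeLieAlgebra ℚ (Fin r × Fin r)) (ftRel r))
    (of ℚ (i, j))

/-!
Adjoin a point `0` to the index set and put `t_{0i} = -∑ k, t_{ki}` and `t_{00} = ∑ k l, t_{kl}`.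
In terms of the enlarged family the relations of `ft(r)` become invariant under all permutations
of `{0, …, r}`: the family is symmetric, entries with disjoint indices commute, and all column sums
vanish. The map `τ` is induced by the transposition `0 ↔ 1`.
-/

section LieQuotient

variable {R L L₂ : Type*} [CommRing R] [LieRing L] [LieAlgebra R L] [LieRing L₂] [LieAlgebra R L₂]

/-- The projection of a Lie algebra onto its quotient by an ideal, as a Lie algebra homomorphism
(`LieSubmodule.Quotient.mk'` is only a homomorphism of Lie modules). -/
def lieQuotientMk (I : LieIdeal R L) : L →ₗ⁅R⁆ L ⧸ I where
  __ := I.toSubmodule.mkQ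
  map_lie' := rfl

/-- The homomorphism out of a quotient Lie algebra induced by one that vanishes on the ideal. -/
def lieQuotientLift (I : LieIdeal R L) (f : L →ₗ⁅R⁆ L₂) (hf : I ≤ f.ker) : L ⧸ I →ₗ⁅R⁆ L₂ where
  __ := I.toSubmodule.liftQ (f : L →ₗ[R] L₂) fun _ hx => LieHom.mem_ker.mp (hf hx)
  map_lie' {x y} := by
    induction x using Submodule.Quotient.induction_on
    induction y using Submodule.Quotient.induction_on
    exact LieHom.map_lie f _ _

theorem existsUnique_comp_lieQuotientMk (I : LieIdeal R L) (f : L →ₗ⁅R⁆ L₂) (hf : I ≤ f.ker) :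
    ∃! g : L ⧸ I →ₗ⁅R⁆ L₂, g.comp (lieQuotientMk I) = f := by
  refine ⟨lieQuotientLift I f hf, rfl, ?_⟩
  rintro g rfl
  ext x
  induction x using Submodule.Quotient.induction_on
  rfl

end LieQuotient

theorem lie_sum_eq_lie_add {ι L : Type*} [Fintype ι] [LieRing L] {x : L} {v : ι → L} {i j : ι}
    (hij : i ≠ j) (hv : ∀ k, k ≠ i → k ≠ j → ⁅x, v k⁆ = 0) :
    ⁅x, ∑ k, v k⁆ = ⁅x, v i + v j⁆ := by
  rw [lie_sum, lie_add, Fintype.sum_eq_add i j hij fun k hk => hv k hk.1 hk.2]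

theorem lie_eq_zero_comm {L : Type*} [LieRing L] {x y : L} : ⁅x, y⁆ = 0 ↔ ⁅y, x⁆ = 0 := by
  rw [← lie_skew, neg_eq_zero]

theorem swap_none_some_of_ne {α : Type*} [DecidableEq α] {a b : α} (h : b ≠ a) :
    Equiv.swap none (some a) (some b) = some b :=
  Equiv.swap_apply_of_ne_of_ne (Option.some_ne_none b) ((Option.some_injective α).ne h)

theorem disjoint_pair_pair_iff {α : Type*} {a b c d : α} :
    Disjoint ({a, b} : Set α) {c, d} ↔ (a ≠ c ∧ a ≠ d) ∧ b ≠ c ∧ b ≠ d := by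
  simp only [Set.disjoint_insert_left, Set.disjoint_singleton_left, Set.mem_insert_iff,
    Set.mem_singleton_iff, not_or, ne_eq]

/-- The defining relations of the framed Drinfeld–Kohno Lie algebra, for a family of elements of an
arbitrary Lie ring. -/
structure IsFramedDrinfeldKohno {ι L : Type*} [LieRing L] (t : ι → ι → L) : Prop where
  symm (i j : ι) : t i j = t j i
  lie_eq_zero {i j k l : ι} (h : Disjoint ({i, j} : Set ι) {k, l}) : ⁅t i j, t k l⁆ = 0
  lie_add_eq_zero (i j k : ι) : ⁅t i j, t k i + t k j⁆ = 0

/-- The permutation-invariant form of the framed Drinfeld–Kohno relations: the three-index relation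
is replaced by the vanishing of all column sums. -/
structure IsCyclicDrinfeldKohno {κ L : Type*} [Fintype κ] [LieRing L] (u : κ → κ → L) : Prop where
  symm (i j : κ) : u i j = u j i
  lie_eq_zero {i j k l : κ} (h : Disjoint ({i, j} : Set κ) {k, l}) : ⁅u i j, u k l⁆ = 0
  sum_eq_zero (j : κ) : ∑ i, u i j = 0

namespace IsCyclicDrinfeldKohno

variable {κ L : Type*} [Fintype κ] [LieRing L] {u : κ → κ → L}

theorem lie_diag (hu : IsCyclicDrinfeldKohno u) (i k : κ) : ⁅u i i, u i k⁆ = 0 := by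
  obtain rfl | hik := eq_or_ne i k
  · exact lie_self _
  calc ⁅u i i, u i k⁆ = ⁅u i i, ∑ l, u l k⁆ := by
        rw [lie_sum, Fintype.sum_eq_single i fun l hl => hu.lie_eq_zero <|
          disjoint_pair_pair_iff.mpr ⟨⟨hl.symm, hik⟩, hl.symm, hik⟩]
    _ = 0 := by rw [hu.sum_eq_zero, lie_zero]

theorem isFramedDrinfeldKohno (hu : IsCyclicDrinfeldKohno u) : IsFramedDrinfeldKohno u where
  symm := hu.symm
  lie_eq_zero := hu.lie_eq_zero
  lie_add_eq_zero i j k := by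
    obtain rfl | hij := eq_or_ne i j
    · rw [lie_add, hu.symm k i, hu.lie_diag, add_zero]
    obtain rfl | hki := eq_or_ne k i
    · rw [lie_add, lie_self, add_zero, lie_eq_zero_comm, hu.lie_diag]
    obtain rfl | hkj := eq_or_ne k j
    · rw [hu.symm i k, lie_add, lie_self, zero_add, lie_eq_zero_comm, hu.lie_diag]
    calc ⁅u i j, u k i + u k j⁆ = ⁅u i j, u i k + u j k⁆ := by rw [hu.symm k i, hu.symm k j]
      _ = ⁅u i j, ∑ l, u l k⁆ := .symm <| lie_sum_eq_lie_add hij fun l hli hlj =>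
          hu.lie_eq_zero <| disjoint_pair_pair_iff.mpr
            ⟨⟨hli.symm, hki.symm⟩, hlj.symm, hkj.symm⟩
      _ = 0 := by rw [hu.sum_eq_zero, lie_zero]

end IsCyclicDrinfeldKohno

/-- The extension of a family by an index `none`, playing the role of the index `0`; the new entries
are the ones that make all column sums of a symmetric family vanish. -/
def cyclicExtension {ι L : Type*} [Fintype ι] [AddCommGroup L] (t : ι → ι → L) :
    Option ι → Option ι → L
  | some i, some j => t i j
  | some i, none => -∑ k, t k i
  | none, some j => -∑ k, t k j
  | none, none => ∑ k, ∑ l, t k l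

namespace IsFramedDrinfeldKohno

variable {ι L : Type*} [LieRing L] {t : ι → ι → L}

theorem comp_injective {κ : Type*} {f : κ → ι} (ht : IsFramedDrinfeldKohno t)
    (hf : Function.Injective f) : IsFramedDrinfeldKohno fun i j => t (f i) (f j) where
  symm _ _ := ht.symm _ _
  lie_eq_zero h := ht.lie_eq_zero <| by
    simpa only [Set.image_pair] using (Set.disjoint_image_iff hf).mpr h
  lie_add_eq_zero _ _ _ := ht.lie_add_eq_zero _ _ _

theorem lie_diag [IsAddTorsionFree L] (ht : IsFramedDrinfeldKohno t) (i k l : ι) :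
    ⁅t i i, t k l⁆ = 0 := by
  have lie_diag_col (k : ι) : ⁅t i i, t k i⁆ = 0 := by
    have two_nsmul_lie := ht.lie_add_eq_zero i i k
    rwa [lie_add, ← two_nsmul, nsmul_eq_zero_iff_right two_ne_zero] at two_nsmul_lie
  obtain rfl | hil := eq_or_ne i l
  · exact lie_diag_col k
  obtain rfl | hik := eq_or_ne i k
  · rw [ht.symm i l, lie_diag_col]
  exact ht.lie_eq_zero <| disjoint_pair_pair_iff.mpr ⟨⟨hik, hil⟩, hik, hil⟩

variable [Fintype ι] [IsAddTorsionFree L]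

theorem lie_sum_col (ht : IsFramedDrinfeldKohno t) {i j k : ι} (hik : i ≠ k) (hjk : j ≠ k) :
    ⁅t i j, ∑ l, t l k⁆ = 0 := by
  obtain rfl | hij := eq_or_ne i j
  · rw [lie_sum, Fintype.sum_eq_zero _ fun l => ht.lie_diag i l k]
  calc ⁅t i j, ∑ l, t l k⁆ = ⁅t i j, t i k + t j k⁆ :=
        lie_sum_eq_lie_add hij fun l hli hlj => ht.lie_eq_zero <| disjoint_pair_pair_iff.mpr
          ⟨⟨hli.symm, hik⟩, hlj.symm, hjk⟩
    _ = ⁅t i j, t k i + t k j⁆ := by rw [ht.symm i k, ht.symm j k]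
    _ = 0 := ht.lie_add_eq_zero i j k

theorem lie_sum_sum (ht : IsFramedDrinfeldKohno t) (i j : ι) :
    ⁅t i j, ∑ k, ∑ l, t k l⁆ = 0 := by
  obtain rfl | hij := eq_or_ne i j
  · simp only [lie_sum, ht.lie_diag, Finset.sum_const_zero]
  calc ⁅t i j, ∑ k, ∑ l, t k l⁆ = ⁅t i j, ∑ l, ∑ k, t k l⁆ := by rw [Finset.sum_comm]
    _ = ⁅t i j, ∑ k, t k i + ∑ k, t k j⁆ := lie_sum_eq_lie_add hij fun _ hli hlj =>
        ht.lie_sum_col hli.symm hlj.symm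
    _ = 0 := by
        simp only [← Finset.sum_add_distrib, lie_sum, ht.lie_add_eq_zero, Finset.sum_const_zero]

theorem lie_cyclicExtension (ht : IsFramedDrinfeldKohno t) {i j : ι} {k l : Option ι}
    (h : Disjoint {some i, some j} ({k, l} : Set (Option ι))) :
    ⁅t i j, cyclicExtension t k l⁆ = 0 := by
  obtain ⟨⟨hik, hil⟩, hjk, hjl⟩ := disjoint_pair_pair_iff.mp h
  match k, l with
  | none, none => exact ht.lie_sum_sum i j
  | none, some l =>
    rw [cyclicExtension, lie_neg, neg_eq_zero]
    exact ht.lie_sum_col (ne_of_apply_ne some hil) (ne_of_apply_ne some hjl)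
  | some k, none =>
    rw [cyclicExtension, lie_neg, neg_eq_zero]
    exact ht.lie_sum_col (ne_of_apply_ne some hik) (ne_of_apply_ne some hjk)
  | some k, some l =>
    rw [← Set.image_pair, ← Set.image_pair, Set.disjoint_image_iff (Option.some_injective ι)] at h
    exact ht.lie_eq_zero h

theorem isCyclicDrinfeldKohno_cyclicExtension (ht : IsFramedDrinfeldKohno t) :
    IsCyclicDrinfeldKohno (cyclicExtension t) where
  symm
    | none, none => rfl
    | none, some _ => rfl
    | some _, none => rfl
    | some i, some j => ht.symm i j
  lie_eq_zero {i j k l} h := by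
    match i, j, k, l with
    | some _, some _, _, _ => exact ht.lie_cyclicExtension h
    | _, _, some _, some _ => exact lie_eq_zero_comm.mp (ht.lie_cyclicExtension h.symm)
    | none, _, none, _ | none, _, _, none | _, none, none, _ | _, none, _, none => simp at h
  sum_eq_zero
    | none => by
      simp only [Fintype.sum_option, cyclicExtension, Finset.sum_neg_distrib]
      rw [Finset.sum_comm, add_neg_cancel]
    | some _ => by
      rw [Fintype.sum_option]
      exact neg_add_cancel _

end IsFramedDrinfeldKohno

section CyclicTwist

variable {ι L : Type*} [Fintype ι] [DecidableEq ι]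

/-- The family obtained by transposing the adjoined index `0` with `z` in the cyclic extension of
`t` and restricting back to the original indices. -/
def cyclicTwist [AddCommGroup L] (z : ι) (t : ι → ι → L) (i j : ι) : L :=
  cyclicExtension t (Equiv.swap none (some z) (some i)) (Equiv.swap none (some z) (some j))

theorem IsFramedDrinfeldKohno.cyclicTwist [LieRing L] [IsAddTorsionFree L] {t : ι → ι → L}
    (ht : IsFramedDrinfeldKohno t) (z : ι) : IsFramedDrinfeldKohno (cyclicTwist z t) :=
  ht.isCyclicDrinfeldKohno_cyclicExtension.isFramedDrinfeldKohno.comp_injective <|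
    (Equiv.swap none (some z)).injective.comp (Option.some_injective ι)

variable [AddCommGroup L] {z i j : ι}

theorem cyclicTwist_of_ne_of_ne (t : ι → ι → L) (hi : i ≠ z) (hj : j ≠ z) :
    cyclicTwist z t i j = t i j := by
  rw [cyclicTwist, swap_none_some_of_ne hi, swap_none_some_of_ne hj, cyclicExtension]

theorem cyclicTwist_left (t : ι → ι → L) (hi : i ≠ z) : cyclicTwist z t z i = -∑ k, t k i := by
  rw [cyclicTwist, Equiv.swap_apply_right, swap_none_some_of_ne hi, cyclicExtension]

theorem cyclicTwist_right (t : ι → ι → L) (hi : i ≠ z) : cyclicTwist z t i z = -∑ k, t k i := by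
  rw [cyclicTwist, Equiv.swap_apply_right, swap_none_some_of_ne hi, cyclicExtension]

theorem cyclicTwist_self (z : ι) (t : ι → ι → L) : cyclicTwist z t z z = ∑ k, ∑ l, t k l := by
  rw [cyclicTwist, Equiv.swap_apply_right, cyclicExtension]

theorem forall_eq_cyclicTwist_iff {t v : ι → ι → L} :
    (∀ i j, v i j = cyclicTwist z t i j) ↔
      (∀ i j, i ≠ z → j ≠ z → v i j = t i j) ∧
      (∀ i, i ≠ z → v z i = -∑ k, t k i) ∧
      (∀ i, i ≠ z → v i z = -∑ k, t k i) ∧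
      v z z = ∑ k, ∑ l, t k l := by
  constructor
  · intro h
    exact ⟨fun i j hi hj => (h i j).trans (cyclicTwist_of_ne_of_ne t hi hj),
      fun i hi => (h z i).trans (cyclicTwist_left t hi),
      fun i hi => (h i z).trans (cyclicTwist_right t hi),
      (h z z).trans (cyclicTwist_self z t)⟩
  · rintro ⟨h_ne_ne, h_left, h_right, h_self⟩ i j
    by_cases hi : i = z <;> by_cases hj : j = z
    · rw [hi, hj, h_self, cyclicTwist_self]
    · rw [hi, h_left j hj, cyclicTwist_left t hj]
    · rw [hj, h_right i hi, cyclicTwist_right t hi]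
    · rw [h_ne_ne i j hi hj, cyclicTwist_of_ne_of_ne t hi hj]

end CyclicTwist

theorem isFramedDrinfeldKohno_tf (r : ℕ) : IsFramedDrinfeldKohno (tf (r := r)) := by
  have mk_eq_zero {x : FreeLieAlgebra ℚ (Fin r × Fin r)} (hx : x ∈ ftRel r) :
      (LieSubmodule.Quotient.mk x : ft r) = 0 :=
    LieSubmodule.Quotient.mk_eq_zero'.mpr (LieSubmodule.subset_lieSpan hx)
  exact
    { symm := fun i j => sub_eq_zero.mp <| mk_eq_zero <| .inl ⟨i, j, rfl⟩
      lie_eq_zero := fun {i j k l} h =>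
        mk_eq_zero <| .inr <| .inl ⟨i, j, k, l, h.inter_eq, rfl⟩
      lie_add_eq_zero := fun i j k => mk_eq_zero <| .inr <| .inr ⟨i, j, k, rfl⟩ }

section UniversalProperty

variable {r : ℕ} {L : Type*} [LieRing L] [LieAlgebra ℚ L] {u : Fin r → Fin r → L}

theorem IsFramedDrinfeldKohno.lieSpan_ftRel_le_ker_lift (hu : IsFramedDrinfeldKohno u) :
    LieSubmodule.lieSpan ℚ (FreeLieAlgebra ℚ (Fin r × Fin r)) (ftRel r) ≤
      (lift ℚ fun p : Fin r × Fin r => u p.1 p.2).ker := by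
  rw [LieSubmodule.lieSpan_le]
  rintro x (⟨i, j, rfl⟩ | ⟨i, j, k, l, h, rfl⟩ | ⟨i, j, k, rfl⟩) <;>
    simp only [SetLike.mem_coe, LieHom.mem_ker, map_sub, map_add, LieHom.map_lie, lift_of_apply]
  · rw [hu.symm, sub_self]
  · exact hu.lie_eq_zero (Set.disjoint_iff_inter_eq_empty.mpr h)
  · exact hu.lie_add_eq_zero i j k

theorem IsFramedDrinfeldKohno.existsUnique_lieHom (hu : IsFramedDrinfeldKohno u) :
    ∃! φ : ft r →ₗ⁅ℚ⁆ L, ∀ i j, φ (tf i j) = u i j := by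
  have comp_mk_eq_lift_iff (φ : ft r →ₗ⁅ℚ⁆ L) :
      φ.comp (lieQuotientMk _) = lift ℚ (fun p : Fin r × Fin r => u p.1 p.2) ↔
        ∀ i j, φ (tf i j) = u i j := by
    rw [← lift_unique, funext_iff, Prod.forall]
    rfl
  simpa only [comp_mk_eq_lift_iff] using
    existsUnique_comp_lieQuotientMk _ _ hu.lieSpan_ftRel_le_ker_lift

end UniversalProperty

/-- For `r ≥ 1` there is a unique Lie algebra homomorphism
`τ : ft(r) → ft(r)` with `τ(t_{ij}) = t_{ij}` for `2 ≤ i,j ≤ r`,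
`τ(t_{1i}) = τ(t_{i1}) = −∑_{k=1}^r t_{ki}` for `2 ≤ i ≤ r`, and
`τ(t_{11}) = ∑_{k,l=1}^r t_{kl}`.  (Here the index `1` is represented by `⟨0, hr⟩ : Fin r`.) -/
theorem exists_unique_cyclic_map (r : ℕ) (hr : 1 ≤ r) :
    ∃! τ : ft r →ₗ⁅ℚ⁆ ft r,
      (∀ i j : Fin r, i ≠ ⟨0, hr⟩ → j ≠ ⟨0, hr⟩ → τ (tf i j) = tf i j) ∧
      (∀ i : Fin r, i ≠ ⟨0, hr⟩ → τ (tf ⟨0, hr⟩ i) = -∑ k : Fin r, tf k i) ∧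
      (∀ i : Fin r, i ≠ ⟨0, hr⟩ → τ (tf i ⟨0, hr⟩) = -∑ k : Fin r, tf k i) ∧
      τ (tf ⟨0, hr⟩ ⟨0, hr⟩) = ∑ k : Fin r, ∑ l : Fin r, tf k l := by
  have : IsAddTorsionFree (ft r) := .of_module_rat _
  simpa only [forall_eq_cyclicTwist_iff] using
    ((isFramedDrinfeldKohno_tf r).cyclicTwist ⟨0, hr⟩).existsUnique_lieHom
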